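/- arXiv:1005.0786 — 2 statements merged into one kernel-verified Lean document; each statement's English description precedes it below -/
import Mathlib

section
/- Let (A, m_A) be a Noetherian local ring and (R, m_R) a Noetherian local A-algebra, flat over A, such that the fiber ring R' = R / m_A R is a regular local ring. Let a_1, …, a_r ∈ R be elements whose images in R' form part of a regular system of parameters of R'. Then a_1, …, a_r is a regular sequence in R, and R/(a_1, …, a_r) is flat over A. -/
open IsLocalRing

theorem max_quot {S : Type*} [CommRing S] [IsLocalRing S] (I : Ideal S) [IsLocalRing (S ⧸ I)] :
    maximalIdeal (S ⧸ I) = (maximalIdeal S).map (Ideal.Quotient.mk I) := by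
  have h := ((IsLocalRing.local_hom_TFAE (Ideal.Quotient.mk I)).out 0 4).mp
    (IsLocalHom.of_surjective _ Ideal.Quotient.mk_surjective)
  rw [← h, Ideal.map_comap_of_surjective _ Ideal.Quotient.mk_surjective]

theorem dim_le_length {S : Type*} [CommRing S] [IsLocalRing S] [IsNoetherianRing S]
    (l : List S) (h : Ideal.ofList l = maximalIdeal S) : ringKrullDim S ≤ (l.length : ℕ) := by
  classical
  refine (ringKrullDim_le_spanFinrank_maximalIdeal S).trans ?_
  have h1 : (maximalIdeal S).spanFinrank ≤ l.toFinset.card := by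
    rw [← h]
    have := Submodule.spanFinrank_span_le_ncard_of_finite (R := S) (l.toFinset.finite_toSet)
    rw [Set.ncard_coe_finset] at this
    convert! this
    simp
  exact_mod_cast h1.trans l.toFinset_card_le

theorem quot_step {S : Type*} [CommRing S] [IsLocalRing S] [IsNoetherianRing S]
    (x : S) (l : List S) (h : Ideal.ofList (x :: l) = maximalIdeal S)
    (hd : ringKrullDim S = ((l.length + 1 : ℕ) : WithBot ℕ∞)) [IsLocalRing (S ⧸ Ideal.span {x})] :
    Ideal.ofList (l.map (Ideal.Quotient.mk (Ideal.span {x}))) = maximalIdeal (S ⧸ Ideal.span {x}) ∧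
    ringKrullDim (S ⧸ Ideal.span {x}) = (l.length : ℕ) := by
  have h1 : Ideal.ofList (l.map (Ideal.Quotient.mk (Ideal.span {x}))) =
      maximalIdeal (S ⧸ Ideal.span {x}) := by
    rw [max_quot, ← h, ← Ideal.map_ofList, Ideal.ofList_cons, Ideal.map_sup,
      Ideal.map_quotient_self, bot_sup_eq]
  refine ⟨h1, le_antisymm ?_ ?_⟩
  · simpa using dim_le_length _ h1
  · have hx : x ∈ maximalIdeal S := h ▸ Ideal.subset_span (by simp)
    have := Ideal.height_le_ringKrullDim_quotient_add_one hx
    rw [maximalIdeal_height_eq_ringKrullDim, hd] at this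
    generalize ringKrullDim (S ⧸ Ideal.span {x}) = k at this ⊢
    push_cast at this
    exact (ENat.WithBot.add_le_add_one_right_iff).mp this

theorem exchange {S : Type*} [CommRing S] [IsLocalRing S] (l : List S) : ∀ x ∈ Ideal.ofList l,
    x ∉ maximalIdeal S * Ideal.ofList l →
    ∃ l' : List S, l'.length + 1 = l.length ∧ Ideal.ofList (x :: l') = Ideal.ofList l := by
  induction l with
  | nil => intro x hx hx'; simp at hx hx'; exact absurd hx hx'
  | cons b l ih =>
    intro x hx hx'
    rw [Ideal.ofList_cons] at hx hx'
    obtain ⟨u, hu, y, hy, rfl⟩ := Submodule.mem_sup.mp hx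
    obtain ⟨s, rfl⟩ := Ideal.mem_span_singleton'.mp hu
    by_cases hs : IsUnit s
    · refine ⟨l, by simp, ?_⟩
      rw [Ideal.ofList_cons, Ideal.ofList_cons]
      apply le_antisymm
      · refine sup_le ?_ le_sup_right
        rwa [Ideal.span_singleton_le_iff_mem]
      · refine sup_le ?_ le_sup_right
        rw [Ideal.span_singleton_le_iff_mem]
        obtain ⟨s, rfl⟩ := hs
        have : b = ↑s⁻¹ * (s * b + y) - ↑s⁻¹ * y := by
          rw [mul_add, ← mul_assoc]; simp
        have hm : ↑s⁻¹ * (s * b + y) - ↑s⁻¹ * y ∈ Ideal.span {↑s * b + y} ⊔ Ideal.ofList l :=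
          Ideal.sub_mem _ (Ideal.mul_mem_left _ _ (Ideal.mem_sup_left
          (Ideal.mem_span_singleton_self _))) (Ideal.mul_mem_left _ _ (Ideal.mem_sup_right hy))
        rwa [← this] at hm
    · have hsm : s ∈ maximalIdeal S := hs
      have hsb : s * b ∈ maximalIdeal S * (Ideal.span {b} ⊔ Ideal.ofList l) :=
        Ideal.mul_mem_mul hsm (Ideal.mem_sup_left (Ideal.mem_span_singleton_self _))
      obtain ⟨l', hl, hl'⟩ := ih y hy (fun hc => hx' (Ideal.add_mem _ hsb
        (Ideal.mul_mono_right le_sup_right hc)))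
      refine ⟨b :: l', by simp [hl], ?_⟩
      simp only [Ideal.ofList_cons] at hl' ⊢
      rw [← hl']
      have hb : b ∈ Ideal.span {b} := Ideal.mem_span_singleton_self _
      apply le_antisymm
      · refine sup_le ?_ (sup_le le_sup_left (le_sup_right.trans le_sup_right))
        rw [Ideal.span_singleton_le_iff_mem]
        exact Ideal.add_mem _ (Ideal.mul_mem_left _ _ (Ideal.mem_sup_left hb))
          (Ideal.mem_sup_right (Ideal.mem_sup_left (Ideal.mem_span_singleton_self _)))
      · refine sup_le (le_sup_left.trans le_sup_right)
          (sup_le ?_ (le_sup_right.trans le_sup_right))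
        rw [Ideal.span_singleton_le_iff_mem]
        have : y = (s * b + y) - s * b := by ring
        have hm : (s * b + y) - s * b ∈ Ideal.span {s * b + y} ⊔
            (Ideal.span {b} ⊔ Ideal.ofList l') :=
          Ideal.sub_mem _ (Ideal.mem_sup_left (Ideal.mem_span_singleton_self _))
          (Ideal.mul_mem_left _ _ (Ideal.mem_sup_right (Ideal.mem_sup_left hb)))
        rwa [← this] at hm

theorem local_quot {S : Type*} [CommRing S] [IsLocalRing S] (I : Ideal S)
    (h : I ≤ maximalIdeal S) : IsLocalRing (S ⧸ I) := by
  have : Nontrivial (S ⧸ I) := Ideal.Quotient.nontrivial_iff.mpr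
    (fun hc => (maximalIdeal.isMaximal S).ne_top (top_le_iff.mp (hc ▸ h)))
  exact IsLocalRing.of_surjective' _ Ideal.Quotient.mk_surjective

theorem regular_isDomain (d : ℕ) : ∀ {S : Type*} [CommRing S] [IsLocalRing S] [IsNoetherianRing S]
    (l : List S), Ideal.ofList l = maximalIdeal S → l.length = d →
    ringKrullDim S = (d : WithBot ℕ∞) → IsDomain S := by
  induction d with
  | zero =>
    intro S _ _ _ l h hl hd
    have : l = [] := List.length_eq_zero_iff.mp hl
    subst this
    rw [Ideal.ofList_nil] at h
    exact (IsLocalRing.isField_iff_maximalIdeal_eq.mpr h.symm).isDomain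
  | succ d ih =>
    intro S _ _ _ l h hl hd
    have hht : (maximalIdeal S).height = (d + 1 : ℕ) := by
      have := maximalIdeal_height_eq_ringKrullDim (R := S)
      rw [hd] at this
      exact_mod_cast this
    have hne : ¬ maximalIdeal S ≤ maximalIdeal S * maximalIdeal S := by
      intro hc
      have h0 : maximalIdeal S = ⊥ := Submodule.eq_bot_of_le_smul_of_le_jacobson_bot _ _
        (IsNoetherian.noetherian _) hc (maximalIdeal_le_jacobson _)
      have := dim_le_length (S := S) [] (by simp [h0])
      rw [hd] at this
      norm_cast at this
    have hex : ∃ x ∈ maximalIdeal S, x ∉ maximalIdeal S * maximalIdeal S ∧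
        ∀ p ∈ minimalPrimes S, x ∉ p := by
      have hfin : (insert (maximalIdeal S * maximalIdeal S) (minimalPrimes S)).Finite :=
        (minimalPrimes.finite_of_isNoetherianRing S).insert _
      have key := (Ideal.subset_union_prime_finite hfin (f := id)
        (maximalIdeal S * maximalIdeal S) (maximalIdeal S * maximalIdeal S)
        (fun i hi h1 _ => by
          rcases hi with rfl | hi
          · exact absurd rfl h1
          · exact hi.1.1) (I := maximalIdeal S)).not
      have : ¬ ((maximalIdeal S : Set S) ⊆
          ⋃ i ∈ (insert (maximalIdeal S * maximalIdeal S) (minimalPrimes S)),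
            ((id i : Ideal S) : Set S)) := by
        rw [key]
        rintro ⟨p, hp | hp, hle⟩
        · rw [hp] at hle; exact hne hle
        · have hpp : p.IsPrime := hp.1.1
          have hpe : p = maximalIdeal S := le_antisymm (le_maximalIdeal hpp.ne_top) hle
          have : (maximalIdeal S).height = 0 := by
            rw [← hpe]; exact (Ideal.height_eq_zero_iff).mpr hp
          rw [hht] at this
          norm_cast at this
      obtain ⟨x, hx, hx'⟩ := Set.not_subset.mp this
      simp only [Set.mem_iUnion, not_exists] at hx'
      exact ⟨x, hx, hx' _ (Set.mem_insert _ _), fun p hp => hx' p (Set.mem_insert_of_mem _ hp)⟩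
    obtain ⟨x, hx, hx2, hxp⟩ := hex
    obtain ⟨l', hl', hgen⟩ := exchange l x (h ▸ hx) (h ▸ hx2)
    have hxle : Ideal.span {x} ≤ maximalIdeal S := (Ideal.span_singleton_le_iff_mem _).mpr hx
    have := local_quot _ hxle
    have hlen : l'.length = d := by omega
    obtain ⟨h1, h2⟩ := quot_step x l' (hgen.trans h) (by rw [hd, hlen])
    have hdom := ih _ h1 (by simpa using hlen) (by rw [h2, hlen])
    have hprime : (Ideal.span {x}).IsPrime := (Ideal.Quotient.isDomain_iff_prime _).mp hdom
    obtain ⟨p, hp, hple⟩ := Ideal.exists_minimalPrimes_le (bot_le : ⊥ ≤ Ideal.span {x})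
    have hpp : p.IsPrime := hp.1.1
    have hp0 : p = ⊥ := by
      refine Submodule.eq_bot_of_le_smul_of_le_jacobson_bot (maximalIdeal S) p
        (IsNoetherian.noetherian _) ?_ (maximalIdeal_le_jacobson _)
      intro y hy
      obtain ⟨z, rfl⟩ := Ideal.mem_span_singleton'.mp (hple hy)
      rw [mul_comm]
      exact Submodule.smul_mem_smul hx ((hpp.mem_or_mem hy).resolve_right (hxp p hp))
    subst hp0
    exact IsDomain.of_bot_isPrime S

theorem regular_head {S : Type*} [CommRing S] [IsLocalRing S] [IsNoetherianRing S]
    (x : S) (l : List S) (h : Ideal.ofList (x :: l) = maximalIdeal S)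
    (hd : ringKrullDim S = ((l.length + 1 : ℕ) : WithBot ℕ∞)) : IsSMulRegular S x := by
  have := regular_isDomain (l.length + 1) _ h rfl hd
  refine IsSMulRegular.of_ne_zero ?_
  rintro rfl
  rw [Ideal.ofList_cons] at h
  have := dim_le_length l (by simpa using h)
  rw [hd] at this
  norm_cast at this
  omega

open scoped TensorProduct

theorem reg_finlen {A R : Type*} [CommRing A] [CommRing R] [IsLocalRing A]
    [Algebra A R] [Module.Flat A R] (a : R)
    (ha : IsSMulRegular (R ⧸ (maximalIdeal A).map (algebraMap A R)) a)
    {N : Type*} [AddCommGroup N] [Module A N] (hN : IsFiniteLength A N) :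
    IsSMulRegular (R ⊗[A] N) a := by
  induction hN with
  | of_subsingleton => intro x y _; exact Subsingleton.elim _ _
  | @of_simple_quotient M _ _ N hs _ ih =>
    have hq : IsSMulRegular (R ⊗[A] (M ⧸ N)) a := by
      obtain ⟨I, hI, ⟨e⟩⟩ := isSimpleModule_iff_quot_maximal.mp hs
      obtain rfl := IsLocalRing.eq_maximalIdeal hI
      have e1 : R ⊗[A] (M ⧸ N) ≃ₗ[R] (R ⧸ (maximalIdeal A).map (algebraMap A R)) :=
        (e.baseChange A R _ _).trans (Ideal.qoutMapEquivTensorQout R).symm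
      exact (e1.isSMulRegular_congr a).mpr ha
    refine isSMulRegular_of_range_eq_ker (f := N.subtype.baseChange R) (g := N.mkQ.baseChange R)
      ?_ ?_ ih hq
    · exact Module.Flat.lTensor_preserves_injective_linearMap (M := R) _ N.injective_subtype
    · ext x
      have h : Function.Exact N.subtype N.mkQ := by
        rw [LinearMap.exact_iff]; simp
      exact (lTensor_exact R h N.mkQ_surjective x).symm

theorem finlen_quot {A : Type*} [CommRing A] [IsLocalRing A] [IsNoetherianRing A] (J : Ideal A)
    (n : ℕ) (h : maximalIdeal A ^ n ≤ J) : IsFiniteLength A (A ⧸ J) := by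
  rw [isFiniteLength_iff_isNoetherian_isArtinian]
  refine ⟨inferInstance, ?_⟩
  by_cases hJ : J = ⊤
  · subst hJ
    have : Subsingleton (A ⧸ (⊤ : Ideal A)) := Ideal.Quotient.subsingleton_iff.mpr rfl
    infer_instance
  have : Nontrivial (A ⧸ J) := Ideal.Quotient.nontrivial_iff.mpr hJ
  have : IsLocalRing (A ⧸ J) := IsLocalRing.of_surjective' _ Ideal.Quotient.mk_surjective
  have hmax : (maximalIdeal A).map (Ideal.Quotient.mk J) = maximalIdeal (A ⧸ J) := by
    have h := ((IsLocalRing.local_hom_TFAE (Ideal.Quotient.mk J)).out 0 4).mp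
      (IsLocalHom.of_surjective _ Ideal.Quotient.mk_surjective)
    rw [← h, Ideal.map_comap_of_surjective _ Ideal.Quotient.mk_surjective]
  have hart : IsArtinianRing (A ⧸ J) := by
    rw [isArtinianRing_iff_isNilpotent_maximalIdeal]
    refine ⟨n, ?_⟩
    rw [← hmax, ← Ideal.map_pow, Ideal.zero_eq_bot, Ideal.map_eq_bot_iff_le_ker, Ideal.mk_ker]
    exact h
  have hart' : IsArtinian (A ⧸ J) (A ⧸ J) := hart
  exact isArtinian_of_surjective_algebraMap (R := A ⧸ J) (M := A ⧸ J) (S := A)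
    Ideal.Quotient.mk_surjective

theorem reg_ideal {A R : Type*} [CommRing A] [CommRing R] [IsLocalRing A] [IsLocalRing R]
    [IsNoetherianRing A] [IsNoetherianRing R]
    [Algebra A R] [Module.Flat A R] (hloc : (maximalIdeal A).map (algebraMap A R) ≤ maximalIdeal R)
    (a : R) (ha : IsSMulRegular (R ⧸ (maximalIdeal A).map (algebraMap A R)) a) (I : Ideal A) :
    ∀ x, a * x ∈ I.map (algebraMap A R) → x ∈ I.map (algebraMap A R) := by
  intro x hx
  have hn : ∀ n : ℕ, x ∈ I.map (algebraMap A R) ⊔ (maximalIdeal R) ^ n := by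
    intro n
    have h1 := reg_finlen a ha (finlen_quot (I ⊔ maximalIdeal A ^ n) n le_sup_right)
    have h2 := ((Ideal.qoutMapEquivTensorQout R).isSMulRegular_congr a).mpr h1
    have h3 := mem_of_isSMulRegular_quotient_of_smul_mem h2 (x := x)
      (Ideal.map_mono le_sup_left hx)
    rw [Ideal.map_sup, Ideal.map_pow] at h3
    exact sup_le_sup_left (Ideal.pow_right_mono hloc n) _ h3
  have hk := Ideal.iInf_pow_smul_eq_bot_of_isLocalRing (M := R ⧸ I.map (algebraMap A R))
    (maximalIdeal R) (maximalIdeal.isMaximal R).ne_top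
  rw [← Ideal.Quotient.eq_zero_iff_mem, ← Submodule.mem_bot R, ← hk, Submodule.mem_iInf]
  intro n
  obtain ⟨u, hu, v, hv, huv⟩ := Submodule.mem_sup.mp (hn n)
  have : Ideal.Quotient.mk (I.map (algebraMap A R)) x = v • 1 := by
    rw [← huv, map_add, Ideal.Quotient.eq_zero_iff_mem.mpr hu, zero_add, Algebra.smul_def, mul_one]
    rfl
  rw [this]
  exact Submodule.smul_mem_smul hv trivial

theorem flat_quot {A R : Type*} [CommRing A] [CommRing R] 
    [Algebra A R] [Module.Flat A R] (a : R)
    (h : ∀ I : Ideal A, ∀ x, a * x ∈ I.map (algebraMap A R) → x ∈ I.map (algebraMap A R)) :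
    Module.Flat A (R ⧸ Ideal.span {a}) := by
  rw [Module.Flat.iff_lift_lsmul_comp_subtype_injective]
  intro I hI
  have hR := Module.Flat.iff_lift_lsmul_comp_subtype_injective.mp ‹Module.Flat A R› hI
  set f := TensorProduct.lift ((LinearMap.lsmul A R).comp I.subtype) with hf
  set g := TensorProduct.lift ((LinearMap.lsmul A (R ⧸ Ideal.span {a})).comp I.subtype) with hg
  let q : R →ₗ[A] (R ⧸ Ideal.span {a}) := (Ideal.Quotient.mkₐ A (Ideal.span {a})).toLinearMap
  have hq : Function.Surjective q := Ideal.Quotient.mk_surjective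
  have hgq : ∀ w, g (q.lTensor I w) = q (f w) := by
    have : g ∘ₗ q.lTensor I = q ∘ₗ f := by
      apply TensorProduct.ext'
      intro i r
      simp [hf, hg]
    exact fun w => LinearMap.congr_fun this w
  have hfa : ∀ w, f ((LinearMap.mulLeft A a).lTensor I w) = a * f w := by
    have : f ∘ₗ (LinearMap.mulLeft A a).lTensor I = LinearMap.mulLeft A a ∘ₗ f := by
      apply TensorProduct.ext'
      intro i r
      simp [hf]
    exact fun w => LinearMap.congr_fun this w
  have hmem : ∀ w, f w ∈ I.map (algebraMap A R) := by
    intro w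
    induction w with
    | zero => simp
    | add x y hx hy => rw [map_add]; exact Ideal.add_mem _ hx hy
    | tmul i r =>
      simp only [hf, TensorProduct.lift.tmul, LinearMap.comp_apply, LinearMap.lsmul_apply,
        Submodule.subtype_apply, Algebra.smul_def]
      exact Ideal.mul_mem_right _ _ (Ideal.mem_map_of_mem _ i.2)
  have hsurj : ∀ y ∈ I.map (algebraMap A R), ∃ w, f w = y := by
    intro y hy
    have hy' : y ∈ (I • ⊤ : Submodule A R) := by
      rw [Ideal.smul_top_eq_map]; exact hy
    refine Submodule.smul_induction_on hy' (fun i hi r _ => ⟨⟨i, hi⟩ ⊗ₜ r, by simp [hf]⟩) ?_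
    rintro _ _ ⟨w, rfl⟩ ⟨w', rfl⟩
    exact ⟨w + w', map_add _ _ _⟩
  rw [injective_iff_map_eq_zero]
  intro z hz
  obtain ⟨w, rfl⟩ := LinearMap.lTensor_surjective I hq z
  rw [hgq] at hz
  have hz' : f w ∈ Ideal.span {a} := Ideal.Quotient.eq_zero_iff_mem.mp hz
  obtain ⟨y, hy⟩ := Ideal.mem_span_singleton.mp hz'
  obtain ⟨w', rfl⟩ := hsurj y (h I y (hy ▸ hmem w))
  rw [← hfa] at hy
  rw [hR hy, ← LinearMap.lTensor_comp_apply]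
  have : q ∘ₗ LinearMap.mulLeft A a = 0 := by
    ext r
    exact Ideal.Quotient.eq_zero_iff_mem.mpr
      (Ideal.mul_mem_right _ _ (Ideal.mem_span_singleton_self _))
  rw [this, LinearMap.lTensor_zero, LinearMap.zero_apply]

universe u v

theorem main_list (A : Type u) [CommRing A] [IsLocalRing A] [IsNoetherianRing A] (n : ℕ) :
    ∀ {R : Type v} [CommRing R] [IsLocalRing R] [IsNoetherianRing R] [Algebra A R]
      [Module.Flat A R] (la lc : List R), la.length = n →
      (maximalIdeal A).map (algebraMap A R) ⊔ Ideal.ofList (la ++ lc) = maximalIdeal R →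
      ringKrullDim (R ⧸ (maximalIdeal A).map (algebraMap A R)) = ((la ++ lc).length : ℕ) →
      RingTheory.Sequence.IsWeaklyRegular R la ∧ Module.Flat A (R ⧸ Ideal.ofList la) := by
  induction n with
  | zero =>
    intro R _ _ _ _ _ la lc hl _ _
    obtain rfl := List.length_eq_zero_iff.mp hl
    refine ⟨.nil R R, ?_⟩
    rw [Ideal.ofList_nil]
    exact Module.Flat.of_linearEquiv (AlgEquiv.quotientBot A R).toLinearEquiv
  | succ n ih =>
    intro R _ _ _ _ _ la lc hl hgen hdim
    obtain ⟨a, la, rfl⟩ := List.exists_cons_of_length_eq_add_one hl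
    set K := (maximalIdeal A).map (algebraMap A R) with hK
    have hKm : K ≤ maximalIdeal R := hgen ▸ le_sup_left
    have ham : a ∈ maximalIdeal R := hgen ▸ Ideal.mem_sup_right (Ideal.subset_span (by simp))
    have := local_quot K hKm
    have hgen' : Ideal.ofList (Ideal.Quotient.mk K a :: (la ++ lc).map (Ideal.Quotient.mk K)) =
        maximalIdeal (R ⧸ K) := by
      rw [max_quot, ← hgen, Ideal.map_sup, Ideal.map_quotient_self, bot_sup_eq, Ideal.map_ofList]
      rfl
    have hdim' : ringKrullDim (R ⧸ K) =
        ((((la ++ lc).map (Ideal.Quotient.mk K)).length + 1 : ℕ) : WithBot ℕ∞) := by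
      rw [hdim]; simp
    have hreg : IsSMulRegular (R ⧸ K) a := by
      have := regular_head _ _ hgen' hdim'
      intro x y hxy
      apply this
      simpa [Algebra.smul_def] using hxy
    have hI := reg_ideal hKm a hreg
    have hflat := flat_quot a hI
    have hareg : IsSMulRegular R a := by
      rw [isSMulRegular_iff_right_eq_zero_of_smul]
      intro x hx
      have := hI ⊥ x (by simpa using hx)
      simpa using this
    have hspan : Ideal.span {a} ≤ maximalIdeal R := (Ideal.span_singleton_le_iff_mem _).mpr ham
    have := local_quot _ hspan
    have hKmap : (maximalIdeal A).map (algebraMap A (R ⧸ Ideal.span {a})) =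
        K.map (Ideal.Quotient.mk (Ideal.span {a})) := by
      rw [hK, Ideal.map_map]; rfl
    have hle2 : Ideal.span {Ideal.Quotient.mk K a} ≤ maximalIdeal (R ⧸ K) := by
      rw [← hgen', Ideal.ofList_cons]; exact le_sup_left
    have := local_quot _ hle2
    have hstep := (quot_step _ _ hgen' hdim').2
    have e : ((R ⧸ Ideal.span {a}) ⧸ K.map (Ideal.Quotient.mk (Ideal.span {a}))) ≃+*
        ((R ⧸ K) ⧸ Ideal.span {Ideal.Quotient.mk K a}) :=
      (DoubleQuot.quotQuotEquivComm (Ideal.span {a}) K).trans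
        (Ideal.quotEquivOfEq (by rw [Ideal.map_span, Set.image_singleton]))
    obtain ⟨h1, h2⟩ := ih (R := R ⧸ Ideal.span {a})
      (la.map (Ideal.Quotient.mk (Ideal.span {a}))) (lc.map (Ideal.Quotient.mk (Ideal.span {a})))
      (by simpa using hl)
      (by
        rw [max_quot, ← hgen, hKmap, ← List.map_append, ← Ideal.map_ofList, ← Ideal.map_sup,
          List.cons_append, Ideal.ofList_cons, Ideal.map_sup, Ideal.map_sup, Ideal.map_sup,
          Ideal.map_quotient_self, bot_sup_eq])
      (by
        rw [hKmap, ringKrullDim_eq_of_ringEquiv e, hstep]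
        simp)
    constructor
    · rw [RingTheory.Sequence.isWeaklyRegular_cons_iff]
      refine ⟨hareg, ?_⟩
      have h1' := (RingTheory.Sequence.isWeaklyRegular_map_algebraMap_iff (R ⧸ Ideal.span {a})
        (R ⧸ Ideal.span {a}) la).mp h1
      refine (LinearEquiv.isWeaklyRegular_congr
        (Submodule.quotEquivOfEq _ (Ideal.span {a}) ?_) la).mpr h1'
      rw [← Submodule.ideal_span_singleton_smul]; simp
    · rw [Ideal.ofList_cons]
      have e2 := DoubleQuot.quotQuotEquivQuotSupₐ A (Ideal.span {a}) (Ideal.ofList la)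
      rw [← Ideal.map_ofList] at h2
      have h2' : Module.Flat A ((R ⧸ Ideal.span {a}) ⧸
          Ideal.map (Ideal.Quotient.mkₐ A (Ideal.span {a})) (Ideal.ofList la)) := h2
      exact Module.Flat.of_linearEquiv e2.symm.toLinearEquiv

/-- elements of a flat local algebra whose images in the regular
fiber ring form part of a regular system of parameters give a regular sequence,
and cutting them out preserves flatness over the base. -/
theorem regular_sequence_of_partial_relative_parameters
    {A R : Type*} [CommRing A] [CommRing R] [IsLocalRing A] [IsLocalRing R]
    [IsNoetherianRing A] [IsNoetherianRing R]
    [Algebra A R] [IsLocalHom (algebraMap A R)] [Module.Flat A R]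
    [IsLocalRing (R ⧸ (maximalIdeal A).map (algebraMap A R))]
    (r : ℕ) (a : Fin r → R)
    -- the images of the `a i` in the fiber ring `R' = R/m_A R` extend to a
    -- generating family of `m_{R'}` of cardinality `dim R'` (a regular system
    -- of parameters of the regular local ring `R'`)
    (hpart : ∃ (s : ℕ) (c : Fin s → R ⧸ (maximalIdeal A).map (algebraMap A R)),
      Ideal.span
          (Set.range (fun i : Fin r =>
              Ideal.Quotient.mk ((maximalIdeal A).map (algebraMap A R)) (a i)) ∪
            Set.range c) =
        maximalIdeal (R ⧸ (maximalIdeal A).map (algebraMap A R)) ∧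
      ((r + s : ℕ) : WithBot (WithTop ℕ)) =
        ringKrullDim (R ⧸ (maximalIdeal A).map (algebraMap A R))) :
    RingTheory.Sequence.IsRegular R (List.ofFn a) ∧
      Module.Flat A (R ⧸ Ideal.span (Set.range a)) := by
  set K := (maximalIdeal A).map (algebraMap A R) with hK
  obtain ⟨s, c, hspan, hdim⟩ := hpart
  have hKm : K ≤ maximalIdeal R := by
    rw [hK, Ideal.map_le_iff_le_comap]
    exact ((IsLocalRing.local_hom_TFAE (algebraMap A R)).out 0 3).mp ‹IsLocalHom (algebraMap A R)›
  choose c' hc' using fun i => Ideal.Quotient.mk_surjective (I := K) (c i)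
  have hofn : ∀ {k : ℕ} (f : Fin k → R), Ideal.ofList (List.ofFn f) = Ideal.span (Set.range f) := by
    intro k f
    unfold Ideal.ofList
    congr 1
    ext x
    simp [List.mem_ofFn]
  have hmap : (Ideal.ofList (List.ofFn a ++ List.ofFn c')).map (Ideal.Quotient.mk K) =
      maximalIdeal (R ⧸ K) := by
    rw [← hspan, Ideal.ofList_append, hofn, hofn, ← Ideal.span_union, Ideal.map_span,
      Set.image_union, ← Set.range_comp, ← Set.range_comp]
    congr 3
    funext i
    exact hc' i
  have hgen : K ⊔ Ideal.ofList (List.ofFn a ++ List.ofFn c') = maximalIdeal R := by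
    have h2 := congrArg (Ideal.comap (Ideal.Quotient.mk K)) (hmap.trans (max_quot K))
    rw [Ideal.comap_map_of_surjective _ Ideal.Quotient.mk_surjective,
      Ideal.comap_map_of_surjective _ Ideal.Quotient.mk_surjective, ← RingHom.ker_eq_comap_bot,
      Ideal.mk_ker, sup_eq_left.mpr hKm] at h2
    rw [sup_comm, h2]
  obtain ⟨h1, h2⟩ := main_list A r (List.ofFn a) (List.ofFn c') (by simp) hgen
    (by rw [← hdim, List.length_append, List.length_ofFn, List.length_ofFn]; rfl)
  refine ⟨?_, ?_⟩
  · rw [IsLocalRing.isRegular_iff_isWeaklyRegular_of_subset_maximalIdeal]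
    · exact h1
    · intro x hx
      rw [← hgen]
      exact Ideal.mem_sup_right (Ideal.subset_span (by simp at hx ⊢; exact Or.inl hx))
  · rw [hofn] at h2
    exact h2
end

section
/- Let k be a field of characteristic zero, R = MvPolynomial (Fin n) k, I a finitely generated ideal with generators f_1, …, f_m, and b ≥ 1. Define Δ^{b−1}(I) to be the ideal generated by all iterated partial derivatives of order at most b−1 of the generators f_1, …, f_m (including the f_j themselves). Then for every k-rational maximal ideal m_a, one has I ⊆ m_a^b if and only if Δ^{b−1}(I) ⊆ m_a; equivalently, the set of k-rational points of order ≥ b of I equals the zero set of Δ^{b−1}(I). -/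
open MvPolynomial

/-- Translation by a point. -/
noncomputable def transHom {k : Type*} [Field k] {n : ℕ} (a : Fin n → k) :
    MvPolynomial (Fin n) k →ₐ[k] MvPolynomial (Fin n) k :=
  aeval (fun i => X i + C (a i))

lemma transHom_neg {k : Type*} [Field k] {n : ℕ} (a : Fin n → k) (g : MvPolynomial (Fin n) k) :
    transHom (-a) (transHom a g) = g := by
  have : (transHom (-a)).comp (transHom a) = AlgHom.id k _ := by
    ext i : 1
    simp [transHom, algHom_C]
  exact DFunLike.congr_fun this g

lemma pderiv_transHom {k : Type*} [Field k] {n : ℕ} (a : Fin n → k) (i : Fin n)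
    (g : MvPolynomial (Fin n) k) :
    pderiv i (transHom a g) = transHom a (pderiv i g) := by
  induction g using MvPolynomial.induction_on with
  | C c => simp [transHom, algHom_C]
  | add p q hp hq => simp [hp, hq]
  | mul_X p j hp =>
    rw [map_mul, pderiv_mul, hp, pderiv_mul, map_add, map_mul, map_mul]
    congr 2
    by_cases h : j = i
    · subst h; simp [transHom]
    · simp [transHom, pderiv_X_of_ne h]

lemma mem_pow_iff_transHom {k : Type*} [Field k] {n : ℕ} (a : Fin n → k) (b : ℕ)
    (g : MvPolynomial (Fin n) k) :
    g ∈ (Ideal.span (Set.range fun i : Fin n => X i - C (a i))) ^ b ↔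
      transHom a g ∈ idealOfVars (Fin n) k ^ b := by
  constructor
  · intro h
    have h2 := Ideal.mem_map_of_mem (transHom a) h
    rw [Ideal.map_pow, Ideal.map_span, ← Set.range_comp] at h2
    have e : (transHom a ∘ fun i : Fin n => X i - C (a i)) = X := by
      funext i
      simp [transHom, algHom_C]
    rw [e] at h2
    exact h2
  · intro h
    have h2 := Ideal.mem_map_of_mem (transHom (-a)) h
    rw [Ideal.map_pow, Ideal.map_span, ← Set.range_comp, transHom_neg] at h2
    have e : (transHom (-a) ∘ X) = fun i : Fin n => X i - C (a i) := by
      funext i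
      simp [transHom, sub_eq_add_neg]
    rw [e] at h2
    exact h2

lemma mem_vars_pow_succ {k : Type*} [Field k] [CharZero k] {n : ℕ} (b : ℕ)
    (g : MvPolynomial (Fin n) k) :
    g ∈ idealOfVars (Fin n) k ^ (b + 1) ↔
      g ∈ idealOfVars (Fin n) k ∧ ∀ i, pderiv i g ∈ idealOfVars (Fin n) k ^ b := by
  constructor
  · intro h
    refine ⟨Ideal.pow_le_self (Nat.succ_ne_zero b) h, fun i => ?_⟩
    rw [mem_pow_idealOfVars_iff'] at h ⊢
    intro x hx
    rw [coeff_pderiv, h _ (by simpa using hx), zero_mul]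
  · rintro ⟨h0, h⟩
    rw [← pow_one (idealOfVars (Fin n) k), mem_pow_idealOfVars_iff'] at h0
    rw [mem_pow_idealOfVars_iff']
    intro x hx
    by_cases hz : x = 0
    · exact h0 x (by simp [hz])
    obtain ⟨i, hi⟩ := Finsupp.ne_iff.mp hz
    have hle : Finsupp.single i 1 ≤ x := by
      rw [Finsupp.single_le_iff]
      exact Nat.one_le_iff_ne_zero.mpr hi
    obtain ⟨y, rfl⟩ := exists_add_of_le hle
    have h1 := (mem_pow_idealOfVars_iff' _ _).mp (h i) y
      (by simp at hx; omega)
    rw [coeff_pderiv, add_comm] at h1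
    refine (mul_eq_zero.mp h1).resolve_right ?_
    exact_mod_cast Nat.succ_ne_zero (y i)

lemma mem_pow_succ_iff_foldl {k : Type*} [Field k] [CharZero k] {n : ℕ} (a : Fin n → k) (b : ℕ)
    (g : MvPolynomial (Fin n) k) :
    g ∈ (Ideal.span (Set.range fun i : Fin n => X i - C (a i))) ^ (b + 1) ↔
      ∀ l : List (Fin n), l.length ≤ b →
        l.foldl (fun h i => pderiv i h) g ∈
          Ideal.span (Set.range fun i : Fin n => X i - C (a i)) := by
  induction b generalizing g with
  | zero => simp
  | succ b ih =>
    have hone := mem_pow_iff_transHom a 1 g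
    rw [pow_one, pow_one] at hone
    rw [mem_pow_iff_transHom, mem_vars_pow_succ, ← hone]
    simp only [pderiv_transHom, ← mem_pow_iff_transHom, ih]
    constructor
    · rintro ⟨h0, h⟩ (_ | ⟨i, l⟩) hl
      · exact h0
      · exact h i l (by simpa using hl)
    · intro h
      exact ⟨h [] (by simp), fun i l hl => h (i :: l) (by simpa using hl)⟩

/-- for a finitely generated ideal `I = (f_1, …, f_m)` and the
ideal `Δ^{b−1}(I)` generated by all iterated partial derivatives of order at
most `b−1` of the generators, a rational point has order ≥ b for `I` iff all
those derivatives vanish there, i.e. iff `Δ^{b−1}(I) ⊆ m_a`. -/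
theorem order_ge_iff_delta_le_maximal
    {k : Type*} [Field k] [CharZero k] (n m b : ℕ) (hb : 1 ≤ b)
    (f : Fin m → MvPolynomial (Fin n) k) (a : Fin n → k) :
    Ideal.span (Set.range f) ≤
        (Ideal.span (Set.range fun i : Fin n => X i - C (a i))) ^ b ↔
      Ideal.span {g | ∃ (j : Fin m) (l : List (Fin n)), l.length ≤ b - 1 ∧
          g = l.foldl (fun h i => pderiv i h) (f j)} ≤
        Ideal.span (Set.range fun i : Fin n => X i - C (a i)) := by
  obtain ⟨c, rfl⟩ : ∃ c, b = c + 1 := ⟨b - 1, by omega⟩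
  rw [Ideal.span_le, Ideal.span_le, Set.range_subset_iff]
  simp only [SetLike.mem_coe, mem_pow_succ_iff_foldl, Nat.add_sub_cancel]
  constructor
  · rintro h _ ⟨j, l, hl, rfl⟩
    exact h j l hl
  · intro h j l hl
    exact h ⟨j, l, hl, rfl⟩
end
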